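/- arXiv:math/0204346 — 4 statements merged into one kernel-verified Lean document; each statement's English description precedes it below -/
import Mathlib

section
/- For triples t₁, t₂ with λ₁, λ₂, λ₁+λ₂ nonzero: the maps Y_{t₁,t₂} and Y'_{t₁,t₂} are injective and are gl(1|1)-intertwiners, i.e. X∘Y_{t₁,t₂} = Y_{t₁,t₂}∘X and X∘Y'_{t₁,t₂} = Y'_{t₁,t₂}∘X for each X ∈ {H,D,E,F} (with X acting on the tensor product by the super-Leibniz rule), and V_{t₁}⊗V_{t₂} is the internal direct sum of the images of Y_{t₁,t₂} and Y'_{t₁,t₂}; equivalently, Y_{t₁,t₂}∘L_{t₁,t₂} + Y'_{t₁,t₂}∘L'_{t₁,t₂} is the identity of V_{t₁}⊗V_{t₂}. This realizes the decomposition V_{t₁}⊗V_{t₂} ≅ V_{t₁+t₂+e₂} ⊕ V_{t₁+t₂−e₂+e₃}. -/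
set_option linter.unusedVariables false

open TensorProduct

noncomputable section

/-- a triple t = (λ, μ, σ) ∈ ℚ × ℚ × ℤ/2 -/
structure Triple where
  lam : ℚ
  mu : ℚ
  sg : ZMod 2

instance : Add Triple := ⟨fun a b => ⟨a.lam + b.lam, a.mu + b.mu, a.sg + b.sg⟩⟩
instance : Neg Triple := ⟨fun a => ⟨-a.lam, -a.mu, -a.sg⟩⟩
instance : Sub Triple := ⟨fun a b => a + -b⟩

def e₂ : Triple := ⟨0, 1, 0⟩
def e₃ : Triple := ⟨0, 0, 1⟩
/-- t* = (−λ, −μ, σ+1) -/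
def Triple.star (t : Triple) : Triple := ⟨-t.lam, -t.mu, t.sg + 1⟩

/-- the underlying space of every V_t: basis v = (1,0) (degree σ), w = (0,1) (degree σ+1) -/
abbrev V : Type := ℚ × ℚ
abbrev VV : Type := V ⊗[ℚ] V
abbrev VVV : Type := V ⊗[ℚ] VV

def vv : V := (1, 0)
def ww : V := (0, 1)

/-- (−1)^σ -/
def sgn (s : ZMod 2) : ℚ := if s = 0 then 1 else -1

/-- H: v ↦ (μ+1)v, w ↦ (μ−1)w -/
def opH (t : Triple) : V →ₗ[ℚ] V :=
  LinearMap.prodMap ((t.mu + 1) • LinearMap.id) ((t.mu - 1) • LinearMap.id)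
/-- D: multiplication by λ -/
def opD (t : Triple) : V →ₗ[ℚ] V := t.lam • LinearMap.id
/-- E: v ↦ 0, w ↦ λv -/
def opE (t : Triple) : V →ₗ[ℚ] V := (LinearMap.inl ℚ ℚ ℚ) ∘ₗ (t.lam • LinearMap.snd ℚ ℚ ℚ)
/-- F: v ↦ w, w ↦ 0 -/
def opF (t : Triple) : V →ₗ[ℚ] V := (LinearMap.inr ℚ ℚ ℚ) ∘ₗ (LinearMap.fst ℚ ℚ ℚ)
/-- the parity operator x ↦ (−1)^{deg x} x on V_t -/
def opJ (t : Triple) : V →ₗ[ℚ] V :=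
  LinearMap.prodMap (sgn t.sg • LinearMap.id) ((- sgn t.sg) • LinearMap.id)

/-- the four generators H, D, E, F of gl(1|1) -/
inductive Gen | H | D | E | F

/-- H and D have degree 0; E and F have degree 1 -/
def Gen.isEven : Gen → Bool
  | .H => true | .D => true | .E => false | .F => false

def op : Gen → Triple → V →ₗ[ℚ] V
  | .H, t => opH t
  | .D, t => opD t
  | .E, t => opE t
  | .F, t => opF t

/-- the super-Leibniz action X·(x⊗y) = (X·x)⊗y + (−1)^{deg X·deg x}·x⊗(X·y)
on V_{t₁}⊗V_{t₂} (the sign being implemented by the parity operator) -/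
def op2 (g : Gen) (t₁ t₂ : Triple) : VV →ₗ[ℚ] VV :=
  TensorProduct.map (op g t₁) LinearMap.id +
  TensorProduct.map (if g.isEven then LinearMap.id else opJ t₁) (op g t₂)

/-- the linear map ℚ×ℚ → M sending (1,0) ↦ p and (0,1) ↦ q -/
def bmap {M : Type*} [AddCommGroup M] [Module ℚ M] (p q : M) : V →ₗ[ℚ] M :=
  LinearMap.coprod (LinearMap.toSpanSingleton ℚ M p) (LinearMap.toSpanSingleton ℚ M q)

/-- Y_{t₁,t₂} : V_{t₁+t₂+e₂} → V_{t₁}⊗V_{t₂} -/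
def Ymap (t₁ t₂ : Triple) : V →ₗ[ℚ] VV :=
  bmap (vv ⊗ₜ[ℚ] vv) (ww ⊗ₜ[ℚ] vv + sgn t₁.sg • (vv ⊗ₜ[ℚ] ww))

/-- Y'_{t₁,t₂} : V_{t₁+t₂−e₂+e₃} → V_{t₁}⊗V_{t₂} -/
def Y'map (t₁ t₂ : Triple) : V →ₗ[ℚ] VV :=
  bmap ((t₁.lam + t₂.lam)⁻¹ •
      (t₁.lam • (vv ⊗ₜ[ℚ] ww) - (sgn t₁.sg * t₂.lam) • (ww ⊗ₜ[ℚ] vv)))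
    (ww ⊗ₜ[ℚ] ww)

/-- L_{t₁,t₂} : V_{t₁}⊗V_{t₂} → V_{t₁+t₂+e₂} -/
def Lmap (t₁ t₂ : Triple) : VV →ₗ[ℚ] V :=
  TensorProduct.lift (LinearMap.mk₂ ℚ
    (fun x y => ((x.1 * y.1 : ℚ),
      (t₁.lam / (t₁.lam + t₂.lam)) * (x.2 * y.1)
        + (sgn t₁.sg * t₂.lam / (t₁.lam + t₂.lam)) * (x.1 * y.2)))
    (by intro x x' y; apply Prod.ext <;> simp <;> ring)
    (by intro a x y; apply Prod.ext <;> simp [smul_eq_mul] <;> ring)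
    (by intro x y y'; apply Prod.ext <;> simp <;> ring)
    (by intro a x y; apply Prod.ext <;> simp [smul_eq_mul] <;> ring))

/-- L'_{t₁,t₂} : V_{t₁}⊗V_{t₂} → V_{t₁+t₂−e₂+e₃} -/
def L'map (t₁ t₂ : Triple) : VV →ₗ[ℚ] V :=
  TensorProduct.lift (LinearMap.mk₂ ℚ
    (fun x y => ((x.1 * y.2 - sgn t₁.sg * (x.2 * y.1) : ℚ), (x.2 * y.2 : ℚ)))
    (by intro x x' y; apply Prod.ext <;> simp <;> ring)
    (by intro a x y; apply Prod.ext <;> simp [smul_eq_mul] <;> ring)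
    (by intro x y y'; apply Prod.ext <;> simp <;> ring)
    (by intro a x y; apply Prod.ext <;> simp [smul_eq_mul] <;> ring))

/-- ∩_t : V_{t*}⊗V_t → ℚ -/
def capMap (t : Triple) : VV →ₗ[ℚ] ℚ :=
  TensorProduct.lift (LinearMap.mk₂ ℚ
    (fun x y => (x.1 * y.2 + sgn t.sg * (x.2 * y.1) : ℚ))
    (by intro x x' y; simp; ring)
    (by intro a x y; simp [smul_eq_mul]; ring)
    (by intro x y y'; simp; ring)
    (by intro a x y; simp [smul_eq_mul]; ring))

/-- ∪_t : ℚ → V_{t*}⊗V_t -/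
def cupMap (t : Triple) : ℚ →ₗ[ℚ] VV :=
  LinearMap.toSpanSingleton ℚ VV (ww ⊗ₜ[ℚ] vv - sgn t.sg • (vv ⊗ₜ[ℚ] ww))


theorem sgn_mul_self' (s : ZMod 2) : sgn s * sgn s = 1 := by
  unfold sgn; split_ifs <;> norm_num

theorem bmap_vv {M : Type*} [AddCommGroup M] [Module ℚ M] (p q : M) : bmap p q vv = p := by
  simp [bmap, vv]
theorem bmap_ww {M : Type*} [AddCommGroup M] [Module ℚ M] (p q : M) : bmap p q ww = q := by
  simp [bmap, ww]

theorem V_hom_ext {M : Type*} [AddCommGroup M] [Module ℚ M] {f g : V →ₗ[ℚ] M}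
    (hv : f vv = g vv) (hw : f ww = g ww) : f = g := by
  apply LinearMap.prod_ext <;> ext <;> simpa [vv, ww] using ‹_›

theorem VV_hom_ext {M : Type*} [AddCommGroup M] [Module ℚ M] {f g : VV →ₗ[ℚ] M}
    (h1 : f (vv ⊗ₜ vv) = g (vv ⊗ₜ vv)) (h2 : f (vv ⊗ₜ ww) = g (vv ⊗ₜ ww))
    (h3 : f (ww ⊗ₜ vv) = g (ww ⊗ₜ vv)) (h4 : f (ww ⊗ₜ ww) = g (ww ⊗ₜ ww)) : f = g := by
  apply TensorProduct.ext
  apply V_hom_ext <;> apply V_hom_ext <;> simpa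

theorem opH_vv (t : Triple) : opH t vv = (t.mu + 1) • vv := by simp [opH, vv]
theorem opH_ww (t : Triple) : opH t ww = (t.mu - 1) • ww := by simp [opH, ww]
theorem opD_ap (t : Triple) (x : V) : opD t x = t.lam • x := by simp [opD]
theorem opE_vv (t : Triple) : opE t vv = 0 := by simp [opE, vv]
theorem opE_ww (t : Triple) : opE t ww = t.lam • vv := by simp [opE, ww, vv]
theorem opF_vv (t : Triple) : opF t vv = ww := by simp [opF, vv, ww]
theorem opF_ww (t : Triple) : opF t ww = 0 := by simp [opF, ww]
theorem opJ_vv (t : Triple) : opJ t vv = sgn t.sg • vv := by simp [opJ, vv]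
theorem opJ_ww (t : Triple) : opJ t ww = (-sgn t.sg) • ww := by simp [opJ, ww]

theorem L_vv_vv (t₁ t₂ : Triple) : Lmap t₁ t₂ (vv ⊗ₜ vv) = vv := by
  simp [Lmap, vv]
theorem L_vv_ww (t₁ t₂ : Triple) :
    Lmap t₁ t₂ (vv ⊗ₜ ww) = (sgn t₁.sg * t₂.lam / (t₁.lam + t₂.lam)) • ww := by
  simp [Lmap, vv, ww]
theorem L_ww_vv (t₁ t₂ : Triple) :
    Lmap t₁ t₂ (ww ⊗ₜ vv) = (t₁.lam / (t₁.lam + t₂.lam)) • ww := by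
  simp [Lmap, vv, ww]
theorem L_ww_ww (t₁ t₂ : Triple) : Lmap t₁ t₂ (ww ⊗ₜ ww) = 0 := by
  simp [Lmap, ww]
theorem L'_vv_vv (t₁ t₂ : Triple) : L'map t₁ t₂ (vv ⊗ₜ vv) = 0 := by
  simp [L'map, vv]
theorem L'_vv_ww (t₁ t₂ : Triple) : L'map t₁ t₂ (vv ⊗ₜ ww) = vv := by
  simp [L'map, vv, ww]
theorem L'_ww_vv (t₁ t₂ : Triple) : L'map t₁ t₂ (ww ⊗ₜ vv) = (-sgn t₁.sg) • vv := by
  simp [L'map, vv, ww]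
theorem L'_ww_ww (t₁ t₂ : Triple) : L'map t₁ t₂ (ww ⊗ₜ ww) = ww := by
  simp [L'map, ww]

theorem add_lam (a b : Triple) : (a + b).lam = a.lam + b.lam := rfl
theorem add_mu (a b : Triple) : (a + b).mu = a.mu + b.mu := rfl
theorem sub_lam (a b : Triple) : (a - b).lam = a.lam + -b.lam := rfl
theorem sub_mu (a b : Triple) : (a - b).mu = a.mu + -b.mu := rfl

/-- Y and Y' are injective gl(1|1)-intertwiners and realize
V_{t₁}⊗V_{t₂} ≅ V_{t₁+t₂+e₂} ⊕ V_{t₁+t₂−e₂+e₃}. -/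
theorem stmt7 (t₁ t₂ : Triple) (h₁ : t₁.lam ≠ 0) (h₂ : t₂.lam ≠ 0)
    (h₁₂ : t₁.lam + t₂.lam ≠ 0) :
    Function.Injective (Ymap t₁ t₂) ∧ Function.Injective (Y'map t₁ t₂) ∧
    (∀ g : Gen, op2 g t₁ t₂ ∘ₗ Ymap t₁ t₂ = Ymap t₁ t₂ ∘ₗ op g (t₁ + t₂ + e₂)) ∧
    (∀ g : Gen, op2 g t₁ t₂ ∘ₗ Y'map t₁ t₂ = Y'map t₁ t₂ ∘ₗ op g (t₁ + t₂ - e₂ + e₃)) ∧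
    Ymap t₁ t₂ ∘ₗ Lmap t₁ t₂ + Y'map t₁ t₂ ∘ₗ L'map t₁ t₂ = LinearMap.id := by
  have hs := sgn_mul_self' t₁.sg
  have hLY : Lmap t₁ t₂ ∘ₗ Ymap t₁ t₂ = LinearMap.id := by
    apply V_hom_ext
    · simp [Ymap, bmap_vv, L_vv_vv]
    · simp only [Ymap, bmap_ww, L_ww_vv, L_vv_ww, LinearMap.comp_apply, map_add, map_smul,
        LinearMap.id_apply]
      match_scalars
      field_simp
      linear_combination t₂.lam * hs
  have hLY' : L'map t₁ t₂ ∘ₗ Y'map t₁ t₂ = LinearMap.id := by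
    apply V_hom_ext
    · simp only [Y'map, bmap_vv, L'_ww_vv, L'_vv_ww, LinearMap.comp_apply, map_sub, map_smul,
        LinearMap.id_apply]
      match_scalars
      field_simp
      linear_combination t₂.lam * hs
    · simp [Y'map, bmap_ww, L'_ww_ww]
  refine ⟨?_, ?_, ?_, ?_, ?_⟩
  · exact Function.LeftInverse.injective (g := Lmap t₁ t₂) fun x => LinearMap.congr_fun hLY x
  · exact Function.LeftInverse.injective (g := L'map t₁ t₂) fun x => LinearMap.congr_fun hLY' x
  · intro g
    cases g <;> apply V_hom_ext <;>
      simp only [LinearMap.comp_apply, LinearMap.add_apply, TensorProduct.map_tmul, map_add, map_sub, map_smul, map_zero, LinearMap.id_apply, TensorProduct.zero_tmul, TensorProduct.tmul_zero, if_true, Bool.false_eq_true, if_false, Ymap, bmap_vv, bmap_ww, op2, op, Gen.isEven, opH_vv, opH_ww, opD_ap, opE_vv, opE_ww,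
        opF_vv, opF_ww, opJ_vv, opJ_ww, add_lam, add_mu, e₂, ← TensorProduct.smul_tmul',
        TensorProduct.tmul_smul] <;>
      match_scalars <;> first | ring1 | linear_combination t₂.lam * hs
  · intro g
    cases g <;> apply V_hom_ext <;>
      simp only [LinearMap.comp_apply, LinearMap.add_apply, TensorProduct.map_tmul, map_add, map_sub, map_smul, map_zero, LinearMap.id_apply, TensorProduct.zero_tmul, TensorProduct.tmul_zero, if_true, Bool.false_eq_true, if_false, Y'map, bmap_vv, bmap_ww, op2, op, Gen.isEven, opH_vv, opH_ww, opD_ap, opE_vv, opE_ww,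
        opF_vv, opF_ww, opJ_vv, opJ_ww, add_lam, add_mu, sub_lam, sub_mu, e₂, e₃,
        ← TensorProduct.smul_tmul', TensorProduct.tmul_smul] <;>
      match_scalars <;> field_simp <;> first | ring1 | linear_combination t₂.lam * hs
  · apply VV_hom_ext <;>
      simp only [Ymap, Y'map, bmap_vv, bmap_ww, L_vv_vv, L_vv_ww, L_ww_vv, L_ww_ww, L'_vv_vv,
        L'_vv_ww, L'_ww_vv, L'_ww_ww, LinearMap.add_apply, LinearMap.comp_apply, map_smul,
        map_zero, LinearMap.id_apply, zero_add, add_zero] <;>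
      match_scalars <;> field_simp <;>
      first | ring1 | linear_combination t₂.lam * hs
end
end

section
/- For every triple t = (λ,μ,σ) with λ ≠ 0, the duality maps satisfy the zigzag identities (∩_{t*}⊗I_t)∘(I_t⊗∪_t) = I_t = (I_t⊗∩_t)∘(∪_{t*}⊗I_t) as linear endomorphisms of V_t, where I_t is the identity of V_t and V_{t**} is identified with V_t. -/
set_option linter.unusedVariables false

open TensorProduct

noncomputable section

/-- the zigzag identities
(∩_{t*}⊗I_t)∘(I_t⊗∪_t) = I_t = (I_t⊗∩_t)∘(∪_{t*}⊗I_t). -/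
theorem stmt8 (t : Triple) (ht : t.lam ≠ 0) :
    ((TensorProduct.lid ℚ V).toLinearMap
      ∘ₗ TensorProduct.map (capMap t.star) LinearMap.id
      ∘ₗ (TensorProduct.assoc ℚ V V V).symm.toLinearMap
      ∘ₗ TensorProduct.map LinearMap.id (cupMap t)
      ∘ₗ (TensorProduct.rid ℚ V).symm.toLinearMap) = LinearMap.id ∧
    ((TensorProduct.rid ℚ V).toLinearMap
      ∘ₗ TensorProduct.map LinearMap.id (capMap t)
      ∘ₗ (TensorProduct.assoc ℚ V V V).toLinearMap
      ∘ₗ TensorProduct.map (cupMap t.star) LinearMap.id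
      ∘ₗ (TensorProduct.lid ℚ V).symm.toLinearMap) = LinearMap.id := by
  have hs : sgn t.sg * sgn t.sg = 1 := by
    unfold sgn; split_ifs <;> norm_num
  have hs' : sgn t.star.sg = - sgn t.sg := by
    have : ∀ s : ZMod 2, s = 0 ∨ s = 1 := by decide
    have h2 : (1 + 1 : ZMod 2) = 0 := by decide
    unfold sgn Triple.star
    rcases this t.sg with h | h <;> simp [h, h2]
  constructor
  · refine LinearMap.ext fun x => ?_
    obtain ⟨a, b⟩ := x
    simp only [capMap, cupMap, hs', vv, ww, LinearMap.comp_apply, LinearEquiv.coe_coe,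
      TensorProduct.rid_symm_apply, TensorProduct.lid_symm_apply, TensorProduct.map_tmul,
      LinearMap.toSpanSingleton_apply, one_smul, TensorProduct.tmul_sub, TensorProduct.tmul_smul,
      map_sub, map_smul, TensorProduct.assoc_symm_tmul, TensorProduct.lift.tmul,
      LinearMap.mk₂_apply, TensorProduct.lid_tmul, LinearMap.id_apply]
    ext <;> simp <;> linear_combination b * hs
  · refine LinearMap.ext fun x => ?_
    obtain ⟨a, b⟩ := x
    simp only [capMap, cupMap, hs', vv, ww, LinearMap.comp_apply, LinearEquiv.coe_coe,
      TensorProduct.rid_symm_apply, TensorProduct.lid_symm_apply, TensorProduct.map_tmul,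
      LinearMap.toSpanSingleton_apply, one_smul, TensorProduct.sub_tmul, TensorProduct.smul_tmul',
      map_sub, map_smul, TensorProduct.assoc_tmul, TensorProduct.lift.tmul,
      LinearMap.mk₂_apply, TensorProduct.rid_tmul, LinearMap.id_apply]
    ext <;> simp <;> linear_combination a * hs
end
end

section
/- For triples t₁, t₂ with λ₁, λ₂, λ₁+λ₂ nonzero, the space of grading-preserving linear endomorphisms of V_{t₁}⊗V_{t₂} that commute with the super-Leibniz actions of all four operators H, D, E, F is 2-dimensional, with basis {Y_{t₁,t₂}∘L_{t₁,t₂}, Y'_{t₁,t₂}∘L'_{t₁,t₂}}. -/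
set_option linter.unusedVariables false

open TensorProduct

noncomputable section

/-- the homogeneous component of V_{t₁}⊗V_{t₂} of degree σ₁+σ₂ -/
def comp₀ : Submodule ℚ VV := Submodule.span ℚ {vv ⊗ₜ[ℚ] vv, ww ⊗ₜ[ℚ] ww}
/-- the homogeneous component of V_{t₁}⊗V_{t₂} of degree σ₁+σ₂+1 -/
def comp₁ : Submodule ℚ VV := Submodule.span ℚ {ww ⊗ₜ[ℚ] vv, vv ⊗ₜ[ℚ] ww}

theorem sgn_cases (s : ZMod 2) : sgn s = 1 ∨ sgn s = -1 := by
  unfold sgn; split_ifs <;> simp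

theorem ext4 {M : Type*} [AddCommGroup M] [Module ℚ M] {f g : VV →ₗ[ℚ] M}
    (ha : f (vv ⊗ₜ[ℚ] vv) = g (vv ⊗ₜ[ℚ] vv)) (hb : f (ww ⊗ₜ[ℚ] vv) = g (ww ⊗ₜ[ℚ] vv))
    (hc : f (vv ⊗ₜ[ℚ] ww) = g (vv ⊗ₜ[ℚ] ww)) (hd : f (ww ⊗ₜ[ℚ] ww) = g (ww ⊗ₜ[ℚ] ww)) :
    f = g := by
  apply TensorProduct.ext'
  have key : ∀ z : V, z = z.1 • vv + z.2 • ww := by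
    intro z; apply Prod.ext <;> simp [vv, ww]
  intro x y
  rw [key x, key y]
  simp only [TensorProduct.add_tmul, TensorProduct.tmul_add, ← TensorProduct.smul_tmul',
    TensorProduct.tmul_smul, map_add, map_smul, ha, hb, hc, hd]

theorem a_ne : (vv ⊗ₜ[ℚ] vv : VV) ≠ 0 := by
  intro h
  have := congrArg (fun z => LinearMap.mul' ℚ ℚ (TensorProduct.map (LinearMap.fst ℚ ℚ ℚ) (LinearMap.fst ℚ ℚ ℚ) z)) h
  simp [vv] at this

theorem d_ne : (ww ⊗ₜ[ℚ] ww : VV) ≠ 0 := by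
  intro h
  have := congrArg (fun z => LinearMap.mul' ℚ ℚ (TensorProduct.map (LinearMap.snd ℚ ℚ ℚ) (LinearMap.snd ℚ ℚ ℚ) z)) h
  simp [ww] at this

section acts
variable (t : Triple)
theorem H_v : op .H t vv = (t.mu + 1) • vv := by apply Prod.ext <;> simp [op, opH, vv]
theorem H_w : op .H t ww = (t.mu - 1) • ww := by apply Prod.ext <;> simp [op, opH, ww]
theorem D_x (x : V) : op .D t x = t.lam • x := by simp [op, opD]
theorem E_v : op .E t vv = 0 := by apply Prod.ext <;> simp [op, opE, vv]
theorem E_w : op .E t ww = t.lam • vv := by apply Prod.ext <;> simp [op, opE, vv, ww]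
theorem F_v : op .F t vv = ww := by apply Prod.ext <;> simp [op, opF, vv, ww]
theorem F_w : op .F t ww = 0 := by apply Prod.ext <;> simp [op, opF, ww]
theorem J_v : opJ t vv = sgn t.sg • vv := by apply Prod.ext <;> simp [opJ, vv]
theorem J_w : opJ t ww = (- sgn t.sg) • ww := by apply Prod.ext <;> simp [opJ, ww]
end acts

section acts2
variable (t₁ t₂ : Triple)
theorem op2_even (g : Gen) (hg : g.isEven = true) (x y : V) :
    op2 g t₁ t₂ (x ⊗ₜ[ℚ] y) = op g t₁ x ⊗ₜ[ℚ] y + x ⊗ₜ[ℚ] op g t₂ y := by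
  simp [op2, hg]
theorem op2_odd (g : Gen) (hg : g.isEven = false) (x y : V) :
    op2 g t₁ t₂ (x ⊗ₜ[ℚ] y) = op g t₁ x ⊗ₜ[ℚ] y + opJ t₁ x ⊗ₜ[ℚ] op g t₂ y := by
  simp [op2, hg]
theorem op2_H (x y : V) : op2 .H t₁ t₂ (x ⊗ₜ[ℚ] y) = op .H t₁ x ⊗ₜ[ℚ] y + x ⊗ₜ[ℚ] op .H t₂ y :=
  op2_even _ _ _ rfl _ _
theorem op2_D (x y : V) : op2 .D t₁ t₂ (x ⊗ₜ[ℚ] y) = op .D t₁ x ⊗ₜ[ℚ] y + x ⊗ₜ[ℚ] op .D t₂ y :=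
  op2_even _ _ _ rfl _ _
theorem op2_E (x y : V) : op2 .E t₁ t₂ (x ⊗ₜ[ℚ] y) = op .E t₁ x ⊗ₜ[ℚ] y + opJ t₁ x ⊗ₜ[ℚ] op .E t₂ y :=
  op2_odd _ _ _ rfl _ _
theorem op2_F (x y : V) : op2 .F t₁ t₂ (x ⊗ₜ[ℚ] y) = op .F t₁ x ⊗ₜ[ℚ] y + opJ t₁ x ⊗ₜ[ℚ] op .F t₂ y :=
  op2_odd _ _ _ rfl _ _

theorem P_a : Ymap t₁ t₂ (Lmap t₁ t₂ (vv ⊗ₜ[ℚ] vv)) = vv ⊗ₜ[ℚ] vv := by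
  simp [Ymap, Lmap, bmap, vv]
theorem P_b : Ymap t₁ t₂ (Lmap t₁ t₂ (ww ⊗ₜ[ℚ] vv)) =
    (t₁.lam / (t₁.lam + t₂.lam)) • (ww ⊗ₜ[ℚ] vv + sgn t₁.sg • (vv ⊗ₜ[ℚ] ww)) := by
  simp [Ymap, Lmap, bmap, vv, ww]
theorem P_c : Ymap t₁ t₂ (Lmap t₁ t₂ (vv ⊗ₜ[ℚ] ww)) =
    (sgn t₁.sg * t₂.lam / (t₁.lam + t₂.lam)) •
      (ww ⊗ₜ[ℚ] vv + sgn t₁.sg • (vv ⊗ₜ[ℚ] ww)) := by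
  simp [Ymap, Lmap, bmap, vv, ww]
theorem P_d : Ymap t₁ t₂ (Lmap t₁ t₂ (ww ⊗ₜ[ℚ] ww)) = 0 := by
  simp [Ymap, Lmap, bmap, ww]
theorem Q_a : Y'map t₁ t₂ (L'map t₁ t₂ (vv ⊗ₜ[ℚ] vv)) = 0 := by
  simp [Y'map, L'map, bmap, vv]
theorem Q_b : Y'map t₁ t₂ (L'map t₁ t₂ (ww ⊗ₜ[ℚ] vv)) =
    (-sgn t₁.sg) • (t₁.lam + t₂.lam)⁻¹ •
      (t₁.lam • (vv ⊗ₜ[ℚ] ww) - (sgn t₁.sg * t₂.lam) • (ww ⊗ₜ[ℚ] vv)) := by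
  simp [Y'map, L'map, bmap, vv, ww]
  module
theorem Q_c : Y'map t₁ t₂ (L'map t₁ t₂ (vv ⊗ₜ[ℚ] ww)) =
    (t₁.lam + t₂.lam)⁻¹ •
      (t₁.lam • (vv ⊗ₜ[ℚ] ww) - (sgn t₁.sg * t₂.lam) • (ww ⊗ₜ[ℚ] vv)) := by
  simp [Y'map, L'map, bmap, vv, ww]
theorem Q_d : Y'map t₁ t₂ (L'map t₁ t₂ (ww ⊗ₜ[ℚ] ww)) = ww ⊗ₜ[ℚ] ww := by
  simp [Y'map, L'map, bmap, ww]
end acts2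

theorem a_mem : (vv ⊗ₜ[ℚ] vv : VV) ∈ comp₀ := Submodule.subset_span (by simp)
theorem d_mem : (ww ⊗ₜ[ℚ] ww : VV) ∈ comp₀ := Submodule.subset_span (by simp)
theorem b_mem : (ww ⊗ₜ[ℚ] vv : VV) ∈ comp₁ := Submodule.subset_span (by simp)
theorem c_mem : (vv ⊗ₜ[ℚ] ww : VV) ∈ comp₁ := Submodule.subset_span (by simp)

theorem pres₀ (f : VV →ₗ[ℚ] VV) (ha : f (vv ⊗ₜ[ℚ] vv) ∈ comp₀) (hd : f (ww ⊗ₜ[ℚ] ww) ∈ comp₀) :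
    ∀ x ∈ comp₀, f x ∈ comp₀ := by
  intro x hx
  obtain ⟨p, q, rfl⟩ := Submodule.mem_span_pair.1 hx
  rw [map_add, map_smul, map_smul]
  exact add_mem (Submodule.smul_mem _ _ ha) (Submodule.smul_mem _ _ hd)

theorem pres₁ (f : VV →ₗ[ℚ] VV) (ha : f (ww ⊗ₜ[ℚ] vv) ∈ comp₁) (hd : f (vv ⊗ₜ[ℚ] ww) ∈ comp₁) :
    ∀ x ∈ comp₁, f x ∈ comp₁ := by
  intro x hx
  obtain ⟨p, q, rfl⟩ := Submodule.mem_span_pair.1 hx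
  rw [map_add, map_smul, map_smul]
  exact add_mem (Submodule.smul_mem _ _ ha) (Submodule.smul_mem _ _ hd)

theorem mem₁ (p q : ℚ) : p • (ww ⊗ₜ[ℚ] vv : VV) + q • (vv ⊗ₜ[ℚ] ww : VV) ∈ comp₁ :=
  Submodule.mem_span_pair.2 ⟨p, q, rfl⟩

theorem commP (t₁ t₂ : Triple) (h₁₂ : t₁.lam + t₂.lam ≠ 0) (g : Gen) :
    (Ymap t₁ t₂ ∘ₗ Lmap t₁ t₂) ∘ₗ op2 g t₁ t₂ = op2 g t₁ t₂ ∘ₗ (Ymap t₁ t₂ ∘ₗ Lmap t₁ t₂) := by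
  rcases sgn_cases t₁.sg with hs | hs <;> cases g <;> apply ext4 <;>
  simp only [LinearMap.comp_apply, op2_H, op2_D, op2_E, op2_F, H_v, H_w, D_x, E_v, E_w, F_v, F_w,
    J_v, J_w, P_a, P_b, P_c, P_d, map_add, map_smul, map_zero, map_sub, TensorProduct.zero_tmul,
    TensorProduct.tmul_zero, TensorProduct.tmul_smul, ← TensorProduct.smul_tmul', hs] <;>
  first
  | module
  | (match_scalars <;> field_simp <;> ring)

theorem commQ (t₁ t₂ : Triple) (h₁₂ : t₁.lam + t₂.lam ≠ 0) (g : Gen) :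
    (Y'map t₁ t₂ ∘ₗ L'map t₁ t₂) ∘ₗ op2 g t₁ t₂ = op2 g t₁ t₂ ∘ₗ (Y'map t₁ t₂ ∘ₗ L'map t₁ t₂) := by
  rcases sgn_cases t₁.sg with hs | hs <;> cases g <;> apply ext4 <;>
  simp only [LinearMap.comp_apply, op2_H, op2_D, op2_E, op2_F, H_v, H_w, D_x, E_v, E_w, F_v, F_w,
    J_v, J_w, Q_a, Q_b, Q_c, Q_d, map_add, map_smul, map_zero, map_sub, TensorProduct.zero_tmul,
    TensorProduct.tmul_zero, TensorProduct.tmul_smul, ← TensorProduct.smul_tmul', hs] <;>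
  first
  | module
  | (match_scalars <;> field_simp <;> ring)

/-- the grading-preserving gl(1|1)-linear endomorphisms of
V_{t₁}⊗V_{t₂} form a 2-dimensional space with basis {Y∘L, Y'∘L'}. -/
theorem stmt9 (t₁ t₂ : Triple) (h₁ : t₁.lam ≠ 0) (h₂ : t₂.lam ≠ 0)
    (h₁₂ : t₁.lam + t₂.lam ≠ 0) :
    -- the two basis elements preserve the grading and commute with the action
    (∀ f ∈ ({Ymap t₁ t₂ ∘ₗ Lmap t₁ t₂, Y'map t₁ t₂ ∘ₗ L'map t₁ t₂} :
        Set (VV →ₗ[ℚ] VV)),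
      (∀ x ∈ comp₀, f x ∈ comp₀) ∧ (∀ x ∈ comp₁, f x ∈ comp₁) ∧
      (∀ g : Gen, f ∘ₗ op2 g t₁ t₂ = op2 g t₁ t₂ ∘ₗ f)) ∧
    -- they are linearly independent
    (∀ c d : ℚ, c • (Ymap t₁ t₂ ∘ₗ Lmap t₁ t₂) + d • (Y'map t₁ t₂ ∘ₗ L'map t₁ t₂) = 0 →
      c = 0 ∧ d = 0) ∧
    -- and they span
    (∀ f : VV →ₗ[ℚ] VV,
      (∀ x ∈ comp₀, f x ∈ comp₀) → (∀ x ∈ comp₁, f x ∈ comp₁) →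
      (∀ g : Gen, f ∘ₗ op2 g t₁ t₂ = op2 g t₁ t₂ ∘ₗ f) →
      ∃ c d : ℚ, f = c • (Ymap t₁ t₂ ∘ₗ Lmap t₁ t₂) + d • (Y'map t₁ t₂ ∘ₗ L'map t₁ t₂)) := by
  refine ⟨?_, ?_, ?_⟩
  · intro f hf
    rcases hf with rfl | rfl
    · refine ⟨pres₀ _ ?_ ?_, pres₁ _ ?_ ?_, commP t₁ t₂ h₁₂⟩ <;>
        simp only [LinearMap.comp_apply, P_a, P_b, P_c, P_d]
      · exact a_mem
      · exact zero_mem _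
      · exact Submodule.smul_mem _ _ (add_mem b_mem (Submodule.smul_mem _ _ c_mem))
      · exact Submodule.smul_mem _ _ (add_mem b_mem (Submodule.smul_mem _ _ c_mem))
    · refine ⟨pres₀ _ ?_ ?_, pres₁ _ ?_ ?_, commQ t₁ t₂ h₁₂⟩ <;>
        simp only [LinearMap.comp_apply, Q_a, Q_b, Q_c, Q_d]
      · exact zero_mem _
      · exact d_mem
      · exact Submodule.smul_mem _ _ (Submodule.smul_mem _ _ (sub_mem (Submodule.smul_mem _ _ c_mem) (Submodule.smul_mem _ _ b_mem)))
      · exact Submodule.smul_mem _ _ (sub_mem (Submodule.smul_mem _ _ c_mem) (Submodule.smul_mem _ _ b_mem))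
  · intro c d h
    have ha := LinearMap.congr_fun h (vv ⊗ₜ[ℚ] vv)
    have hd := LinearMap.congr_fun h (ww ⊗ₜ[ℚ] ww)
    simp only [LinearMap.add_apply, LinearMap.smul_apply, LinearMap.comp_apply, P_a, Q_a, P_d, Q_d,
      smul_zero, add_zero, zero_add, LinearMap.zero_apply] at ha hd
    exact ⟨(smul_eq_zero.1 ha).resolve_right a_ne, (smul_eq_zero.1 hd).resolve_right d_ne⟩
  · intro f hf0 hf1 hg
    obtain ⟨p, q, hpa⟩ := Submodule.mem_span_pair.1 (hf0 _ a_mem)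
    obtain ⟨q', p', hpd⟩ := Submodule.mem_span_pair.1 (hf0 _ d_mem)
    have Ha := LinearMap.congr_fun (hg .H) (vv ⊗ₜ[ℚ] vv)
    have Hd := LinearMap.congr_fun (hg .H) (ww ⊗ₜ[ℚ] ww)
    have Fa := LinearMap.congr_fun (hg .F) (vv ⊗ₜ[ℚ] vv)
    have Ed := LinearMap.congr_fun (hg .E) (ww ⊗ₜ[ℚ] ww)
    simp only [LinearMap.comp_apply, op2_H, op2_E, op2_F, H_v, H_w, E_v, E_w, F_v, F_w,
      J_v, J_w, ← hpa, ← hpd, map_add, map_smul, TensorProduct.zero_tmul,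
      TensorProduct.tmul_zero, TensorProduct.tmul_smul, ← TensorProduct.smul_tmul'] at Ha Hd Fa Ed
    have hq : (4 * q) • (ww ⊗ₜ[ℚ] ww : VV) = 0 := by
      linear_combination (norm := (match_scalars <;> field_simp <;> ring)) Ha
    have hq' : (4 * q') • (vv ⊗ₜ[ℚ] vv : VV) = 0 := by
      linear_combination (norm := (match_scalars <;> field_simp <;> ring)) (-1 : ℚ) • Hd
    have hq0 : q = 0 := by
      have := (smul_eq_zero.1 hq).resolve_right d_ne
      linarith
    have hq0' : q' = 0 := by
      have := (smul_eq_zero.1 hq').resolve_right a_ne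
      linarith
    subst hq0 hq0'
    generalize hB : f (ww ⊗ₜ[ℚ] vv) = B at *
    generalize hC : f (vv ⊗ₜ[ℚ] ww) = C at *
    refine ⟨p, p', ext4 ?_ ?_ ?_ ?_⟩ <;>
    simp only [LinearMap.add_apply, LinearMap.smul_apply, LinearMap.comp_apply, P_a, Q_a, P_d, Q_d,
      P_b, P_c, Q_b, Q_c]
    · rw [← hpa]; module
    · rw [hB]
      rcases sgn_cases t₁.sg with hs | hs <;> rw [hs] at Fa Ed ⊢
      · linear_combination (norm := (match_scalars <;> field_simp <;> ring)) (t₁.lam / (t₁.lam + t₂.lam)) • Fa - (t₁.lam + t₂.lam)⁻¹ • Ed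
      · linear_combination (norm := (match_scalars <;> field_simp <;> ring)) (t₁.lam / (t₁.lam + t₂.lam)) • Fa + (t₁.lam + t₂.lam)⁻¹ • Ed
    · rw [hC]
      rcases sgn_cases t₁.sg with hs | hs <;> rw [hs] at Fa Ed ⊢
      · linear_combination (norm := (match_scalars <;> field_simp <;> ring)) (t₂.lam / (t₁.lam + t₂.lam)) • Fa + (t₁.lam + t₂.lam)⁻¹ • Ed
      · linear_combination (norm := (match_scalars <;> field_simp <;> ring)) (-t₂.lam / (t₁.lam + t₂.lam)) • Fa + (t₁.lam + t₂.lam)⁻¹ • Ed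
    · rw [← hpd]; module
end
end

section
/- As linear maps V_{t₈} → V_{t₁}⊗V_{t₂}⊗V_{t₃}: (I_{t₁}⊗Y'_{t₂,t₃})∘Y_{t₁,t₉} = −((−1)^{σ₂}·λ₃/(λ₂+λ₃))·(Y'_{t₁,t₂}⊗I_{t₃})∘Y_{t₇,t₃} + κ·(Y_{t₁,t₂}⊗I_{t₃})∘Y'_{t₄,t₃}, and (I_{t₁}⊗Y_{t₂,t₃})∘Y'_{t₁,t₆} = (Y'_{t₁,t₂}⊗I_{t₃})∘Y_{t₇,t₃} + ((−1)^{σ₂}·λ₁/(λ₁+λ₂))·(Y_{t₁,t₂}⊗I_{t₃})∘Y'_{t₄,t₃}. Moreover each of the two pairs {(I_{t₁}⊗Y'_{t₂,t₃})∘Y_{t₁,t₉}, (I_{t₁}⊗Y_{t₂,t₃})∘Y'_{t₁,t₆}} and {(Y'_{t₁,t₂}⊗I_{t₃})∘Y_{t₇,t₃}, (Y_{t₁,t₂}⊗I_{t₃})∘Y'_{t₄,t₃}} is linearly independent. -/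
set_option linter.unusedVariables false

open TensorProduct

noncomputable section

/-- t₄ = t₁+t₂+e₂ -/
def T4 (t₁ t₂ : Triple) : Triple := t₁ + t₂ + e₂
/-- t₅ = t₄+t₃+e₂ -/
def T5 (t₁ t₂ t₃ : Triple) : Triple := T4 t₁ t₂ + t₃ + e₂
/-- t₆ = t₂+t₃+e₂ -/
def T6 (t₂ t₃ : Triple) : Triple := t₂ + t₃ + e₂
/-- t₇ = t₄−2e₂+e₃ -/
def T7 (t₁ t₂ : Triple) : Triple := T4 t₁ t₂ - e₂ - e₂ + e₃
/-- t₈ = t₅−2e₂+e₃ -/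
def T8 (t₁ t₂ t₃ : Triple) : Triple := T5 t₁ t₂ t₃ - e₂ - e₂ + e₃
/-- t₉ = t₆−2e₂+e₃ -/
def T9 (t₂ t₃ : Triple) : Triple := T6 t₂ t₃ - e₂ - e₂ + e₃
/-- κ = λ₂(λ₁+λ₂+λ₃)/((λ₁+λ₂)(λ₂+λ₃)) -/
def kap (t₁ t₂ t₃ : Triple) : ℚ :=
  t₂.lam * (t₁.lam + t₂.lam + t₃.lam) / ((t₁.lam + t₂.lam) * (t₂.lam + t₃.lam))

set_option linter.unusedSimpArgs false

theorem V_ext {M : Type*} [AddCommGroup M] [Module ℚ M] {f g : V →ₗ[ℚ] M}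
    (h1 : f vv = g vv) (h2 : f ww = g ww) : f = g := by
  apply LinearMap.ext
  rintro ⟨x, y⟩
  have : ((x, y) : V) = x • vv + y • ww := by simp [vv, ww]
  rw [this]; simp only [map_add, map_smul, h1, h2]

theorem sgn_add (s t : ZMod 2) : sgn (s + t) = sgn s * sgn t := by
  have h : ∀ x : ZMod 2, x = 0 ∨ x = 1 := by decide
  have h2 : (1 + 1 : ZMod 2) = 0 := by decide
  rcases h s with rfl | rfl <;> rcases h t with rfl | rfl <;> simp [sgn, h2]

theorem sgn_T4 (a b : Triple) : sgn (T4 a b).sg = sgn a.sg * sgn b.sg := by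
  rw [← sgn_add]; congr 1
  change a.sg + b.sg + 0 = _
  ring

theorem sgn_T7 (a b : Triple) : sgn (T7 a b).sg = - (sgn a.sg * sgn b.sg) := by
  have : (T7 a b).sg = (a.sg + b.sg) + 1 := by
    change a.sg + b.sg + 0 + -0 + -0 + 1 = _
    ring
  rw [this, sgn_add, sgn_add]; simp [sgn]

theorem lam_T4 (a b : Triple) : (T4 a b).lam = a.lam + b.lam := by
  change a.lam + b.lam + 0 = _
  ring
theorem lam_T6 (a b : Triple) : (T6 a b).lam = a.lam + b.lam := by
  change a.lam + b.lam + 0 = _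
  ring

/-- coordinate functional -/
def coord (f g h : V →ₗ[ℚ] ℚ) : VVV →ₗ[ℚ] ℚ :=
  LinearMap.mul' ℚ ℚ ∘ₗ TensorProduct.map f (LinearMap.mul' ℚ ℚ ∘ₗ TensorProduct.map g h)

theorem coord_tmul (f g h : V →ₗ[ℚ] ℚ) (x y z : V) :
    coord f g h (x ⊗ₜ[ℚ] (y ⊗ₜ[ℚ] z)) = f x * (g y * h z) := by
  simp [coord]

/-- Lemma 24: change of bases in Hom(V_{t₈}, V_{t₁}⊗V_{t₂}⊗V_{t₃}). -/
theorem stmt12 (t₁ t₂ t₃ : Triple)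
    (h₁ : t₁.lam ≠ 0) (h₂ : t₂.lam ≠ 0) (h₃ : t₃.lam ≠ 0)
    (h₁₂ : t₁.lam + t₂.lam ≠ 0) (h₂₃ : t₂.lam + t₃.lam ≠ 0)
    (h₁₂₃ : t₁.lam + t₂.lam + t₃.lam ≠ 0) :
    TensorProduct.map LinearMap.id (Y'map t₂ t₃) ∘ₗ Ymap t₁ (T9 t₂ t₃) =
      (-(sgn t₂.sg * t₃.lam / (t₂.lam + t₃.lam))) •
        ((TensorProduct.assoc ℚ V V V).toLinearMap
          ∘ₗ TensorProduct.map (Y'map t₁ t₂) LinearMap.id ∘ₗ Ymap (T7 t₁ t₂) t₃)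
      + kap t₁ t₂ t₃ •
        ((TensorProduct.assoc ℚ V V V).toLinearMap
          ∘ₗ TensorProduct.map (Ymap t₁ t₂) LinearMap.id ∘ₗ Y'map (T4 t₁ t₂) t₃) ∧
    TensorProduct.map LinearMap.id (Ymap t₂ t₃) ∘ₗ Y'map t₁ (T6 t₂ t₃) =
      ((TensorProduct.assoc ℚ V V V).toLinearMap
          ∘ₗ TensorProduct.map (Y'map t₁ t₂) LinearMap.id ∘ₗ Ymap (T7 t₁ t₂) t₃)
      + (sgn t₂.sg * t₁.lam / (t₁.lam + t₂.lam)) •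
        ((TensorProduct.assoc ℚ V V V).toLinearMap
          ∘ₗ TensorProduct.map (Ymap t₁ t₂) LinearMap.id ∘ₗ Y'map (T4 t₁ t₂) t₃) ∧
    (∀ a b : ℚ,
      a • (TensorProduct.map LinearMap.id (Y'map t₂ t₃) ∘ₗ Ymap t₁ (T9 t₂ t₃))
        + b • (TensorProduct.map LinearMap.id (Ymap t₂ t₃) ∘ₗ Y'map t₁ (T6 t₂ t₃)) = 0 →
      a = 0 ∧ b = 0) ∧
    (∀ a b : ℚ,
      a • ((TensorProduct.assoc ℚ V V V).toLinearMap
            ∘ₗ TensorProduct.map (Y'map t₁ t₂) LinearMap.id ∘ₗ Ymap (T7 t₁ t₂) t₃)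
        + b • ((TensorProduct.assoc ℚ V V V).toLinearMap
            ∘ₗ TensorProduct.map (Ymap t₁ t₂) LinearMap.id ∘ₗ Y'map (T4 t₁ t₂) t₃) = 0 →
      a = 0 ∧ b = 0) := by
  have h₁₂₃' : t₁.lam + (t₂.lam + t₃.lam) ≠ 0 := by rwa [← add_assoc]
  have ev : ∀ (f g h : V →ₗ[ℚ] ℚ) (k : V →ₗ[ℚ] VVV), k = 0 → coord f g h (k ww) = 0 := by
    intro f g h k hk; simp [hk]
  refine ⟨?_, ?_, ?_, ?_⟩
  · apply V_ext <;>
    simp only [LinearMap.comp_apply, LinearMap.add_apply, LinearMap.smul_apply, LinearEquiv.coe_coe,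
      LinearMap.zero_apply, Ymap, Y'map, bmap_vv, bmap_ww, TensorProduct.map_tmul, LinearMap.id_apply, map_add, map_sub,
      map_smul, map_zero, TensorProduct.tmul_add, TensorProduct.add_tmul, TensorProduct.tmul_sub,
      TensorProduct.sub_tmul, TensorProduct.tmul_smul, ← TensorProduct.smul_tmul',
      TensorProduct.assoc_tmul, sgn_T4, sgn_T7, lam_T4, lam_T6, kap] <;>
    rcases sgn_cases t₁.sg with e1 | e1 <;> rcases sgn_cases t₂.sg with e2 | e2 <;>
    rw [e1, e2] <;> match_scalars <;> field_simp <;> ring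
  · apply V_ext <;>
    simp only [LinearMap.comp_apply, LinearMap.add_apply, LinearMap.smul_apply, LinearEquiv.coe_coe,
      LinearMap.zero_apply, Ymap, Y'map, bmap_vv, bmap_ww, TensorProduct.map_tmul, LinearMap.id_apply, map_add, map_sub,
      map_smul, map_zero, TensorProduct.tmul_add, TensorProduct.add_tmul, TensorProduct.tmul_sub,
      TensorProduct.sub_tmul, TensorProduct.tmul_smul, ← TensorProduct.smul_tmul',
      TensorProduct.assoc_tmul, sgn_T4, sgn_T7, lam_T4, lam_T6, kap] <;>
    rcases sgn_cases t₁.sg with e1 | e1 <;> rcases sgn_cases t₂.sg with e2 | e2 <;>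
    rw [e1, e2] <;> match_scalars <;> field_simp <;> ring
  · intro a b hab
    have c1 := ev (LinearMap.fst ℚ ℚ ℚ) (LinearMap.snd ℚ ℚ ℚ) (LinearMap.snd ℚ ℚ ℚ) _ hab
    have c2 := ev (LinearMap.snd ℚ ℚ ℚ) (LinearMap.snd ℚ ℚ ℚ) (LinearMap.fst ℚ ℚ ℚ) _ hab
    simp only [LinearMap.comp_apply, LinearMap.add_apply, LinearMap.smul_apply, LinearEquiv.coe_coe,
      LinearMap.zero_apply, Ymap, Y'map, bmap_vv, bmap_ww, TensorProduct.map_tmul, LinearMap.id_apply, map_add, map_sub,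
      map_smul, map_zero, TensorProduct.tmul_add, TensorProduct.add_tmul, TensorProduct.tmul_sub,
      TensorProduct.sub_tmul, TensorProduct.tmul_smul, ← TensorProduct.smul_tmul',
      TensorProduct.assoc_tmul, sgn_T4, sgn_T7, lam_T4, lam_T6, kap, coord_tmul] at c1 c2
    have ha : a = 0 := by
      rcases sgn_cases t₁.sg with e1 | e1 <;> simpa [vv, ww, e1] using c1
    subst ha
    simpa [vv, ww] using c2
  · intro a b hab
    have c1 := ev (LinearMap.snd ℚ ℚ ℚ) (LinearMap.snd ℚ ℚ ℚ) (LinearMap.fst ℚ ℚ ℚ) _ hab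
    have c2 := ev (LinearMap.snd ℚ ℚ ℚ) (LinearMap.fst ℚ ℚ ℚ) (LinearMap.snd ℚ ℚ ℚ) _ hab
    simp only [LinearMap.comp_apply, LinearMap.add_apply, LinearMap.smul_apply, LinearEquiv.coe_coe,
      LinearMap.zero_apply, Ymap, Y'map, bmap_vv, bmap_ww, TensorProduct.map_tmul, LinearMap.id_apply, map_add, map_sub,
      map_smul, map_zero, TensorProduct.tmul_add, TensorProduct.add_tmul, TensorProduct.tmul_sub,
      TensorProduct.sub_tmul, TensorProduct.tmul_smul, ← TensorProduct.smul_tmul',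
      TensorProduct.assoc_tmul, sgn_T4, sgn_T7, lam_T4, lam_T6, kap, coord_tmul] at c1 c2
    have ha : a = 0 := by simpa [vv, ww] using c1
    subst ha
    simpa [vv, ww] using c2
end
end
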